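/- arXiv:2503.02663 — 5 statements merged into one kernel-verified Lean document; each statement's English description precedes it below -/
import Mathlib

section
/- For every planar binary tree t, the flip-equivalence class of t is a finite set whose cardinality equals 2^(ℓ t), where ℓ t is the number of internal positions of t whose two children subtrees are not flip-equivalent; in particular every flip-equivalence class of planar binary trees has cardinality a power of two. -/
/-- Planar binary trees. -/
inductive T : Type where
  | nil : T
  | node : T → T → T

/-- The number of nodes of a planar binary tree. -/
def T.nodes : T → ℕ
  | .nil => 0
  | .node a b => a.nodes + b.nodes + 1

/-- Flip equivalence: the least relation such that `nil ≈ nil` and, whenever `a ≈ c` and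
`b ≈ d`, both `node a b ≈ node c d` and `node a b ≈ node d c`. -/
inductive Flip : T → T → Prop where
  | nil : Flip .nil .nil
  | node {a b c d : T} : Flip a c → Flip b d → Flip (.node a b) (.node c d)
  | swap {a b c d : T} : Flip a c → Flip b d → Flip (.node a b) (.node d c)

open Classical in
/-- The number of internal positions of a tree whose two children subtrees are not
flip-equivalent. -/
noncomputable def ell : T → ℕ
  | .nil => 0
  | .node a b => ell a + ell b + (if Flip a b then 0 else 1)

theorem Flip.refl_aux : ∀ t : T, Flip t t
  | .nil => .nil
  | .node a b => .node (Flip.refl_aux a) (Flip.refl_aux b)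

theorem Flip.symm_aux {s t : T} (h : Flip s t) : Flip t s := by
  induction h with
  | nil => exact .nil
  | node _ _ h1 h2 => exact .node h1 h2
  | swap _ _ h1 h2 => exact .swap h2 h1

theorem Flip.trans_aux {s t u : T} (h : Flip s t) (hh : Flip t u) : Flip s u := by
  induction h generalizing u with
  | nil => exact hh
  | node _ _ h1 h2 =>
    cases hh with
    | node k1 k2 => exact .node (h1 k1) (h2 k2)
    | swap k1 k2 => exact .swap (h1 k1) (h2 k2)
  | swap _ _ h1 h2 =>
    cases hh with
    | node k1 k2 => exact .swap (h1 k2) (h2 k1)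
    | swap k1 k2 => exact .node (h1 k2) (h2 k1)

/-- The class of a node, as a union of two images of products. -/
theorem flip_class_node (a b : T) :
    {s : T | Flip s (.node a b)} =
      (fun p : T × T => T.node p.1 p.2) '' ({s | Flip s a} ×ˢ {s | Flip s b}) ∪
      (fun p : T × T => T.node p.1 p.2) '' ({s | Flip s b} ×ˢ {s | Flip s a}) := by
  ext s
  constructor
  · intro h
    cases h with
    | node k1 k2 => exact Or.inl ⟨(_, _), ⟨k1, k2⟩, rfl⟩
    | swap k1 k2 => exact Or.inr ⟨(_, _), ⟨k1, k2⟩, rfl⟩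
  · rintro (⟨⟨x, y⟩, ⟨k1, k2⟩, rfl⟩ | ⟨⟨x, y⟩, ⟨k1, k2⟩, rfl⟩)
    · exact .node k1 k2
    · exact .swap k1 k2

theorem node_pair_injective : Function.Injective (fun p : T × T => T.node p.1 p.2) := by
  rintro ⟨a, b⟩ ⟨c, d⟩ h
  simpa using h

/-- The flip-equivalence class of any planar binary tree `t` is a finite set of cardinality
`2 ^ ell t`; in particular every flip-equivalence class has cardinality a power of two. -/
theorem flip_class_card_pow_two (t : T) :
    {s : T | Flip s t}.Finite ∧ {s : T | Flip s t}.ncard = 2 ^ ell t := by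
  induction t with
  | nil =>
    have : {s : T | Flip s .nil} = {T.nil} := by
      ext s
      constructor
      · intro h
        cases h
        rfl
      · rintro rfl
        exact .nil
    rw [this]
    simp [ell]
  | node a b iha ihb =>
    obtain ⟨fa, ca⟩ := iha
    obtain ⟨fb, cb⟩ := ihb
    rw [flip_class_node]
    have f1 := (fa.prod fb).image (fun p : T × T => T.node p.1 p.2)
    have f2 := (fb.prod fa).image (fun p : T × T => T.node p.1 p.2)
    refine ⟨f1.union f2, ?_⟩
    by_cases h : Flip a b
    · have e : {s | Flip s a} = {s | Flip s b} := by
        ext s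
        exact ⟨fun k => k.trans_aux h, fun k => k.trans_aux h.symm_aux⟩
      rw [e, Set.union_self, Set.ncard_image_of_injective _ node_pair_injective, Set.ncard_prod]
      rw [e] at ca
      conv_lhs => arg 1; rw [ca]
      rw [cb]
      simp [ell, h, pow_add]
    · rw [Set.ncard_union_eq _ f1 f2, Set.ncard_image_of_injective _ node_pair_injective,
        Set.ncard_image_of_injective _ node_pair_injective, Set.ncard_prod, Set.ncard_prod, ca, cb]
      · simp only [ell, h, if_false, pow_add]
        ring
      · rw [Set.disjoint_image_iff node_pair_injective, Set.disjoint_left]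
        rintro ⟨x, y⟩ ⟨k1, _⟩ ⟨k3, _⟩
        exact h (k1.symm_aux.trans_aux k3)
end

section
/- For every natural number n, Σ_{k=0}^{n} 2^k · K(n,k) equals the n-th Catalan number. -/
open Classical in
/-- The array `K n ℓ`: base cases (taking precedence) `K n 0 = 1` if `n = 2^r - 1` and `0`
otherwise; `K s t = 0` for `t ≥ s > 0`; `K s (s-1) = 1` for `s > 1`; otherwise
`K (2n) ℓ = (1/2) · ∑_{k=0}^{2n-1} ∑_{v=0}^{ℓ-1} K k v · K (2n-1-k) (ℓ-1-v)`,
`K (2n+1) (2ℓ) = K n ℓ + (1/2) · ∑_{k=0}^{2n} ∑_{v=0}^{2ℓ-1} K k v · K (2n-k) (2ℓ-1-v)` and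
`K (2n+1) (2ℓ+1) = (1/2) · (-K n ℓ + ∑_{k=0}^{2n} ∑_{v=0}^{2ℓ} K k v · K (2n-k) (2ℓ-v))`. -/
noncomputable def K : ℕ → ℕ → ℚ
  | n, l =>
    if l = 0 then (if ∃ r : ℕ, n = 2 ^ r - 1 then 1 else 0)
    else if 0 < n ∧ n ≤ l then 0
    else if 1 < n ∧ l = n - 1 then 1
    else if h : n % 2 = 0 then
      (1 / 2) * ∑ k ∈ (Finset.range n).attach, ∑ v ∈ Finset.range l,
        K k.1 v * K (n - 1 - k.1) (l - 1 - v)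
    else if l % 2 = 0 then
      K (n / 2) (l / 2) + (1 / 2) * ∑ k ∈ (Finset.range n).attach, ∑ v ∈ Finset.range l,
        K k.1 v * K (n - 1 - k.1) (l - 1 - v)
    else
      (1 / 2) * (- K (n / 2) (l / 2) + ∑ k ∈ (Finset.range n).attach, ∑ v ∈ Finset.range l,
        K k.1 v * K (n - 1 - k.1) (l - 1 - v))
termination_by n l => n
decreasing_by
  · have := Finset.mem_range.mp k.2; omega
  · have := Finset.mem_range.mp k.2; omega
  · omega
  · have := Finset.mem_range.mp k.2; omega
  · have := Finset.mem_range.mp k.2; omega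
  · omega
  · have := Finset.mem_range.mp k.2; omega
  · have := Finset.mem_range.mp k.2; omega

section Helpers

open Finset Polynomial

/-- The convolution sum in the recurrence. -/
noncomputable def convT (n l : ℕ) : ℚ :=
  ∑ k ∈ range (n + 1), ∑ p ∈ antidiagonal l, K k p.1 * K (n - k) p.2

lemma K_sum_eq (n l : ℕ) :
    ∑ k ∈ (Finset.range (n + 1)).attach, ∑ v ∈ Finset.range (l + 1),
        K k.1 v * K (n + 1 - 1 - k.1) (l + 1 - 1 - v) = convT n l := by
  rw [Finset.sum_attach (Finset.range (n + 1)) (fun k => ∑ v ∈ Finset.range (l + 1),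
        K k v * K (n + 1 - 1 - k) (l + 1 - 1 - v))]
  unfold convT
  refine Finset.sum_congr rfl fun k _ => ?_
  rw [Finset.Nat.sum_antidiagonal_eq_sum_range_succ_mk]
  simp

open Classical in
lemma K_zero_right (n : ℕ) :
    K n 0 = if ∃ r : ℕ, n = 2 ^ r - 1 then 1 else 0 := by
  rw [K]; simp

lemma K_zero_zero : K 0 0 = 1 := by
  rw [K_zero_right, if_pos ⟨0, by norm_num⟩]

lemma K_zero_succ (l : ℕ) : K 0 (l + 1) = 0 := by
  rw [K]; simp

lemma K_even_zero (m : ℕ) : K (2 * m + 2) 0 = 0 := by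
  rw [K_zero_right, if_neg]
  rintro ⟨r, hr⟩
  rcases r with _ | r
  · simp at hr
  · have : 0 < 2 ^ r := by positivity
    rw [pow_succ] at hr
    omega

open Classical in
lemma K_odd_zero (m : ℕ) : K (2 * m + 1) 0 = K m 0 := by
  rw [K_zero_right, K_zero_right]
  refine if_congr ?_ rfl rfl
  constructor
  · rintro ⟨r, hr⟩
    rcases r with _ | r
    · simp at hr
    · refine ⟨r, ?_⟩
      rw [pow_succ] at hr
      omega
  · rintro ⟨r, hr⟩
    refine ⟨r + 1, ?_⟩
    have : 0 < 2 ^ r := by positivity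
    rw [pow_succ]
    omega

lemma K_big {n l : ℕ} (h : 0 < n) (h2 : n ≤ l) : K n l = 0 := by
  rw [K, if_neg (by omega), if_pos (And.intro h h2)]

lemma K_top (n : ℕ) : K (n + 1) n = 1 := by
  rcases n with _ | n
  · rw [K_zero_right, if_pos ⟨1, by norm_num⟩]
  · rw [K, if_neg (by omega), if_neg (by omega), if_pos (by omega)]

lemma K_gt {n l : ℕ} (h : n < l) : K n l = 0 := by
  rcases Nat.eq_zero_or_pos n with rfl | h0
  · obtain ⟨l, rfl⟩ := Nat.exists_eq_succ_of_ne_zero (show l ≠ 0 by omega)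
    exact K_zero_succ l
  · exact K_big h0 h.le

/-- The correction term. -/
noncomputable def corr (n l : ℕ) : ℚ :=
  if n % 2 = 0 then 0 else if l % 2 = 0 then K (n / 2) (l / 2) else -(1/2) * K (n / 2) (l / 2)

lemma prod_zero {k k' v v' : ℕ} (h : k + k' ≤ v + v') (h0 : 0 < k + k') :
    K k v * K k' v' = 0 := by
  by_cases hk : k < v
  · rw [K_gt hk, zero_mul]
  by_cases hk' : k' < v'
  · rw [K_gt hk', mul_zero]
  rcases Nat.eq_zero_or_pos k with h1 | h1
  · rw [K_big (n := k') (by omega) (by omega), mul_zero]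
  · rw [K_big (n := k) (by omega) (by omega), zero_mul]

lemma convT_big {n l : ℕ} (h : 0 < n) (h2 : n ≤ l) : convT n l = 0 := by
  unfold convT
  refine sum_eq_zero fun k hk => sum_eq_zero fun p hp => ?_
  rw [mem_range] at hk
  rw [HasAntidiagonal.mem_antidiagonal] at hp
  exact prod_zero (by omega) (by omega)

lemma convT_zero (l : ℕ) : convT 0 l = if l = 0 then 1 else 0 := by
  unfold convT
  rcases l with _ | l
  · simp [K_zero_zero]
  · simp only [zero_add, range_one, sum_singleton]
    rw [if_neg (by omega)]
    refine sum_eq_zero fun p hp => ?_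
    rw [HasAntidiagonal.mem_antidiagonal] at hp
    by_cases h : 0 < p.1
    · rw [K_gt h, zero_mul]
    · rw [K_gt (n := 0 - 0) (l := p.2) (by omega), mul_zero]

lemma conv_zero_left (n l : ℕ) :
    ∑ p ∈ antidiagonal l, K 0 p.1 * K n p.2 = K n l := by
  rw [Finset.sum_eq_single (0, l)]
  · simp [K_zero_zero]
  · rintro ⟨a, b⟩ hp hne
    rw [HasAntidiagonal.mem_antidiagonal] at hp
    have : 0 < a := by
      rcases Nat.eq_zero_or_pos a with rfl | h
      · simp at hp; simp [hp] at hne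
      · exact h
    simp [K_gt this]
  · simp

lemma conv_zero_right (n l : ℕ) :
    ∑ p ∈ antidiagonal l, K n p.1 * K 0 p.2 = K n l := by
  rw [← conv_zero_left, ← Finset.Nat.sum_antidiagonal_swap]
  simp [mul_comm]

lemma convT_top (n : ℕ) : convT (n + 1) n = 2 := by
  unfold convT
  rw [sum_range_succ, sum_range_succ']
  simp only [Nat.sub_self, Nat.sub_zero, conv_zero_left, conv_zero_right, K_top]
  rw [sum_eq_zero]
  · norm_num
  · intro k hk
    rw [mem_range] at hk
    refine sum_eq_zero fun p hp => ?_
    rw [HasAntidiagonal.mem_antidiagonal] at hp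
    by_cases h : k + 1 ≤ p.1
    · rw [K_big (by omega) h, zero_mul]
    · rw [K_big (n := n + 1 - (k + 1)) (by omega) (by omega), mul_zero]

lemma K_rec (n l : ℕ) : K (n + 1) (l + 1) = corr (n + 1) (l + 1) + (1 / 2) * convT n l := by
  by_cases h1 : n ≤ l
  · rw [K_big (by omega) (by omega)]
    rcases Nat.eq_zero_or_pos n with rfl | hn
    · rw [convT_zero]
      rcases l with _ | l
      · norm_num [corr, K_zero_zero]
      · have : K 0 ((l + 1 + 1) / 2) = 0 := K_gt (by omega)
        simp [corr, this]
    · rw [convT_big hn h1]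
      unfold corr
      split_ifs with h2 h3
      · simp
      · rw [K_big (by omega) (by omega)]; simp
      · rw [K_big (by omega) (by omega)]; simp
  by_cases h2 : n = l + 1
  · subst h2
    rw [K_top, convT_top]
    unfold corr
    split_ifs with h2 h3
    · norm_num
    · rw [K_big (by omega) (by omega)]; norm_num
    · omega
  · rw [K, if_neg (by omega), if_neg (by omega), if_neg (by omega), K_sum_eq]
    unfold corr
    split_ifs with h3 h4
    · ring
    · ring
    · ring

/-- Row polynomial. -/
noncomputable def rowP (n : ℕ) : ℚ[X] := ∑ l ∈ range (n + 1), monomial l (K n l)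

lemma coeff_rowP (n l : ℕ) : (rowP n).coeff l = K n l := by
  unfold rowP
  simp only [finsetSum_coeff, coeff_monomial]
  rw [Finset.sum_ite_eq' (range (n + 1)) l (fun j => K n j)]
  split_ifs with h
  · rfl
  · rw [K_gt]; simpa using h

lemma eval_rowP (n : ℕ) : (rowP n).eval 2 = ∑ k ∈ range (n + 1), 2 ^ k * K n k := by
  unfold rowP
  simp [eval_finsetSum, mul_comm]

lemma coeff_conv (n l : ℕ) :
    (∑ k ∈ range (n + 1), rowP k * rowP (n - k)).coeff l = convT n l := by
  simp [convT, finsetSum_coeff, coeff_mul, coeff_rowP]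

lemma rowP_even (m : ℕ) : rowP (2 * m + 2) =
    C (1/2) * (X * ∑ k ∈ range (2 * m + 1 + 1), rowP k * rowP (2 * m + 1 - k)) := by
  ext l
  rw [coeff_C_mul]
  rcases l with _ | l
  · rw [coeff_rowP, K_even_zero, coeff_X_mul_zero, mul_zero]
  · rw [coeff_rowP, coeff_X_mul, coeff_conv, K_rec, corr, if_pos (by omega), zero_add]

lemma rowP_odd (m : ℕ) : rowP (2 * m + 1) =
    expand ℚ 2 (rowP m) - C (1/2) * (X * expand ℚ 2 (rowP m)) +
    C (1/2) * (X * ∑ k ∈ range (2 * m + 1), rowP k * rowP (2 * m - k)) := by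
  ext l
  rw [coeff_add, coeff_sub, coeff_C_mul, coeff_C_mul]
  rcases l with _ | l
  · rw [coeff_rowP, K_odd_zero, coeff_X_mul_zero, coeff_X_mul_zero, coeff_expand (by norm_num),
      coeff_rowP]
    simp
  · rw [coeff_rowP, coeff_X_mul, coeff_X_mul, coeff_conv, K_rec, corr, if_neg (by omega),
      coeff_expand (by norm_num), coeff_expand (by norm_num), coeff_rowP, coeff_rowP,
      show (2 * m + 1) / 2 = m by omega]
    by_cases h : (l + 1) % 2 = 0
    · rw [if_pos h, if_pos (by omega), if_neg (by omega)]; ring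
    · rw [if_neg h, if_neg (by omega), if_pos (by omega), show (l + 1) / 2 = l / 2 by omega]; ring

lemma eval_rec (n : ℕ) : (rowP (n + 1)).eval 2 =
    ∑ k ∈ range (n + 1), (rowP k).eval 2 * (rowP (n - k)).eval 2 := by
  rcases Nat.even_or_odd' n with ⟨m, rfl | rfl⟩
  · rw [rowP_odd]
    simp only [eval_add, eval_sub, eval_mul, eval_C, eval_X, eval_finsetSum]
    ring
  · rw [rowP_even]
    simp only [eval_mul, eval_C, eval_X, eval_finsetSum]
    ring

lemma eval_catalan (n : ℕ) : (rowP n).eval 2 = (catalan n : ℚ) := by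
  induction n using Nat.strong_induction_on with
  | _ n ih =>
    rcases n with _ | n
    · simp [eval_rowP, K_zero_zero]
    · rw [eval_rec, catalan_succ, Fin.sum_univ_eq_sum_range
        (fun i => catalan i * catalan (n - i)) (n + 1)]
      push_cast
      refine sum_congr rfl fun k hk => ?_
      rw [mem_range] at hk
      rw [ih k (by omega), ih (n - k) (by omega)]

end Helpers

/-- For every natural number `n`, `∑_{k=0}^{n} 2^k · K n k` is the `n`-th Catalan number. -/
theorem sum_two_pow_K_eq_catalan (n : ℕ) :
    ∑ k ∈ Finset.range (n + 1), 2 ^ k * K n k = (catalan n : ℚ) := by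
  rw [← eval_rowP, eval_catalan]
end

section
/- For every n ≥ 1, the number of flip-equivalence classes of planar binary trees with exactly n nodes whose class cardinality is 1 (equivalently, in which every pair of sibling subtrees is flip-equivalent) is 1 if n = 2^r − 1 for some integer r ≥ 1, and 0 otherwise. -/
theorem Flip.refl' (t : T) : Flip t t := by
  induction t with
  | nil => exact .nil
  | node a b iha ihb => exact .node iha ihb

/-- The complete binary tree of height `r`. -/
def full : ℕ → T
  | 0 => .nil
  | r + 1 => .node (full r) (full r)

theorem full_nodes (r : ℕ) : (full r).nodes + 1 = 2 ^ r := by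
  induction r with
  | zero => rfl
  | succ r ih => simp only [full, T.nodes, pow_succ]; omega

theorem flip_full (r : ℕ) : ∀ s, Flip s (full r) → s = full r := by
  induction r with
  | zero => intro s h; cases h; rfl
  | succ r ih =>
    intro s h
    cases h with
    | node h1 h2 => rw [ih _ h1, ih _ h2]; rfl
    | swap h1 h2 => rw [ih _ h1, ih _ h2]; rfl

theorem eq_full (t : T) : (∀ s, Flip s t → s = t) → ∃ r, t = full r := by
  induction t with
  | nil => intro _; exact ⟨0, rfl⟩
  | node a b iha ihb =>
    intro h
    obtain ⟨i, hi⟩ := iha (fun s hs => (T.node.inj (h _ (.node hs (Flip.refl' b)))).1)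
    have hab := (T.node.inj (h _ (.swap (Flip.refl' b) (Flip.refl' a)))).1
    refine ⟨i + 1, ?_⟩
    rw [hab, hi]; rfl

theorem class_full (r : ℕ) : {s : T | Flip s (full r)} = {full r} := by
  ext s
  constructor
  · exact flip_full r s
  · rintro rfl
    exact Flip.refl' _

theorem singleton_class {t : T} (h : {s : T | Flip s t}.ncard = 1) : ∃ r, t = full r := by
  obtain ⟨x, hx⟩ := Set.ncard_eq_one.1 h
  apply eq_full
  have key : ∀ s, Flip s t → s = x := fun s hs => by
    have : s ∈ {s : T | Flip s t} := hs
    rw [hx] at this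
    exact this
  intro s hs
  rw [key s hs, key t (Flip.refl' t)]

open Classical in
/-- For `n ≥ 1`, the number of flip-equivalence classes of planar binary trees with exactly
`n` nodes and class cardinality `1` is `1` if `n = 2^r − 1` for some `r ≥ 1`, and `0`
otherwise. -/
theorem singleton_classes_count (n : ℕ) (hn : 1 ≤ n) :
    {C : Set T | (∃ t : T, t.nodes = n ∧ C = {s : T | Flip s t}) ∧ C.ncard = 1}.ncard =
      if ∃ r : ℕ, 1 ≤ r ∧ n = 2 ^ r - 1 then 1 else 0 := by
  split_ifs with h
  · obtain ⟨r, hr, rfl⟩ := h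
    rw [Set.ncard_eq_one]
    refine ⟨{full r}, ?_⟩
    ext C
    constructor
    · rintro ⟨⟨t, ht, rfl⟩, hc⟩
      obtain ⟨k, rfl⟩ := singleton_class hc
      have h1 := full_nodes k
      have h2 : 0 < 2 ^ r := by positivity
      have h3 : 2 ^ k = 2 ^ r := by omega
      have h4 : k = r := Nat.pow_right_injective (le_refl 2) h3
      subst h4
      exact class_full k
    · rintro rfl
      refine ⟨⟨full r, ?_, (class_full r).symm⟩, Set.ncard_singleton _⟩
      have h1 := full_nodes r
      omega
  · convert Set.ncard_empty (Set T)
    rw [Set.eq_empty_iff_forall_notMem]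
    rintro C ⟨⟨t, ht, rfl⟩, hc⟩
    obtain ⟨k, rfl⟩ := singleton_class hc
    have h1 := full_nodes k
    refine h ⟨k, ?_, by omega⟩
    rcases k with _ | k
    · simp at h1; omega
    · omega
end

section
/- For all natural numbers n and k, B₂(n,k) equals the number of color-preserving flip-equivalence classes of 2-colored planar binary trees with exactly n nodes of which exactly k are black; in particular B₂(n,k) is a natural number. -/
/-- 2-colored planar binary trees: each node carries a color, black = `true`. -/
inductive T2 : Type where
  | nil : T2
  | node : Bool → T2 → T2 → T2

/-- The number of nodes of a 2-colored planar binary tree. -/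
def T2.nodes : T2 → ℕ
  | .nil => 0
  | .node _ a b => a.nodes + b.nodes + 1

/-- The number of black (`true`) nodes of a 2-colored planar binary tree. -/
def T2.blacks : T2 → ℕ
  | .nil => 0
  | .node c a b => a.blacks + b.blacks + (if c then 1 else 0)

/-- Color-preserving flip equivalence: the least relation such that `nil ≈ nil` and,
whenever `a ≈ c` and `b ≈ d`, both `node col a b ≈ node col c d` and
`node col a b ≈ node col d c` for every color `col`. -/
inductive Flip2 : T2 → T2 → Prop where
  | nil : Flip2 .nil .nil
  | node {a b c d : T2} (col : Bool) :
      Flip2 a c → Flip2 b d → Flip2 (.node col a b) (.node col c d)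
  | swap {a b c d : T2} (col : Bool) :
      Flip2 a c → Flip2 b d → Flip2 (.node col a b) (.node col d c)

/-- The sequence `B` with `B 0 = B 1 = 1` and, for `n ≥ 1`,
`B (2n) = (1/2) · ∑_{k=0}^{2n-1} B (2n-1-k) · B k` and
`B (2n+1) = (1/2) · (∑_{k=0}^{2n} B (2n-k) · B k + B n)`. -/
def B : ℕ → ℚ
  | 0 => 1
  | 1 => 1
  | n + 2 =>
    (1 / 2) * ((∑ k ∈ (Finset.range (n + 2)).attach, B (n + 1 - k.1) * B k.1)
      + if (n + 2) % 2 = 0 then 0 else B ((n + 1) / 2))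
termination_by n => n
decreasing_by
  · omega
  · have := Finset.mem_range.mp k.2; omega
  · omega

/-- The array `B2 n k` of 2-colored non-isomorphic binary tree counts: base cases
`B2 0 0 = B2 1 0 = B2 1 1 = 1`, `B2 0 k = 0` for `k > 0`, `B2 1 k = 0` for `k > 1`,
`B2 n 0 = B n` for `n > 1`, `B2 n k = 0` for `k > n`; and for `k > 0` the recurrences
`B2 (2n) k = (1/2) · ∑_{r=0}^{1} ∑_{ℓ=0}^{2n-1} ∑_{m=0}^{k-r} B2 ℓ m · B2 (2n-1-ℓ) (k-r-m)`,
`B2 (2n+1) (2k) = (1/2) · (∑_{r=0}^{1} ∑_{ℓ=0}^{2n} ∑_{m=0}^{2k-r} B2 ℓ m · B2 (2n-ℓ) (2k-r-m) + B2 n k)`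
and similarly
`B2 (2n+1) (2k+1) = (1/2) · (∑_{r=0}^{1} ∑_{ℓ=0}^{2n} ∑_{m=0}^{2k+r} B2 ℓ m · B2 (2n-ℓ) (2k+r-m) + B2 n k)`. -/
def B2 : ℕ → ℕ → ℚ
  | 0, k => if k = 0 then 1 else 0
  | 1, k => if k ≤ 1 then 1 else 0
  | n + 2, k =>
    if k = 0 then B (n + 2)
    else if n + 2 < k then 0
    else
      (1 / 2) * ((∑ r ∈ Finset.range 2, ∑ l ∈ (Finset.range (n + 2)).attach,
          ∑ m ∈ Finset.range (k - r + 1), B2 l.1 m * B2 (n + 1 - l.1) (k - r - m))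
        + if (n + 2) % 2 = 0 then 0 else B2 ((n + 1) / 2) (k / 2))
termination_by n k => n
decreasing_by
  · have := Finset.mem_range.mp l.2; omega
  · omega
  · omega

theorem Flip2.refl' : ∀ t, Flip2 t t
  | .nil => .nil
  | .node c a b => .node c (Flip2.refl' a) (Flip2.refl' b)

theorem Flip2.symm' {s t : T2} (h : Flip2 s t) : Flip2 t s := by
  induction h with
  | nil => exact .nil
  | node col _ _ h1 h2 => exact .node col h1 h2
  | swap col _ _ h1 h2 => exact .swap col h2 h1

theorem Flip2.trans' {s t : T2} (h : Flip2 s t) : ∀ {u : T2}, Flip2 t u → Flip2 s u := by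
  induction h with
  | nil => intro u h; exact h
  | node col _ _ h1 h2 =>
    intro u h
    cases h with
    | node _ a b => exact .node col (h1 a) (h2 b)
    | swap _ a b => exact .swap col (h1 a) (h2 b)
  | swap col _ _ h1 h2 =>
    intro u h
    cases h with
    | node _ a b => exact .swap col (h1 b) (h2 a)
    | swap _ a b => exact .node col (h1 b) (h2 a)

theorem Flip2.nodes_eq {s t : T2} (h : Flip2 s t) : s.nodes = t.nodes := by
  induction h with
  | nil => rfl
  | node col _ _ h1 h2 => simp only [T2.nodes, h1, h2]
  | swap col _ _ h1 h2 => simp only [T2.nodes, h1, h2]; omega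

theorem Flip2.blacks_eq {s t : T2} (h : Flip2 s t) : s.blacks = t.blacks := by
  induction h with
  | nil => rfl
  | node col _ _ h1 h2 => simp only [T2.blacks, h1, h2]
  | swap col _ _ h1 h2 => simp only [T2.blacks, h1, h2]; omega

def flipSetoid : Setoid T2 := ⟨Flip2, Flip2.refl', Flip2.symm', fun h g => Flip2.trans' h g⟩

/-- Flip classes. -/
def FQ : Type := Quotient flipSetoid

namespace FQ

def mk (t : T2) : FQ := Quotient.mk flipSetoid t

theorem mk_eq {s t : T2} : mk s = mk t ↔ Flip2 s t := Quotient.eq (r := flipSetoid)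

theorem ind {p : FQ → Prop} (h : ∀ t, p (mk t)) (q : FQ) : p q := Quotient.ind h q

def nodes (q : FQ) : ℕ := Quotient.lift T2.nodes (fun _ _ h => Flip2.nodes_eq h) q
def blacks (q : FQ) : ℕ := Quotient.lift T2.blacks (fun _ _ h => Flip2.blacks_eq h) q

@[simp] theorem nodes_mk (t : T2) : nodes (mk t) = t.nodes := rfl
@[simp] theorem blacks_mk (t : T2) : blacks (mk t) = t.blacks := rfl

/-- The node constructor on unordered pairs. -/
noncomputable def node (c : Bool) (z : Sym2 FQ) : FQ :=
  mk (.node c (Quotient.out z.out.1) (Quotient.out z.out.2))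

theorem mk_out (q : FQ) : mk (Quotient.out q) = q := Quotient.out_eq q

theorem flip_node {c d : Bool} {a b a' b' : T2} :
    Flip2 (.node c a b) (.node d a' b') ↔
      c = d ∧ ((Flip2 a a' ∧ Flip2 b b') ∨ (Flip2 a b' ∧ Flip2 b a')) := by
  constructor
  · intro h
    cases h with
    | node _ h1 h2 => exact ⟨rfl, .inl ⟨h1, h2⟩⟩
    | swap _ h1 h2 => exact ⟨rfl, .inr ⟨h1, h2⟩⟩
  · rintro ⟨rfl, ⟨h1, h2⟩ | ⟨h1, h2⟩⟩
    · exact .node _ h1 h2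
    · exact .swap _ h1 h2

theorem node_mk (c : Bool) (a b : T2) : node c s(mk a, mk b) = mk (.node c a b) := by
  unfold node
  rw [mk_eq, flip_node]
  refine ⟨rfl, ?_⟩
  have h : s((s(mk a, mk b)).out.1, (s(mk a, mk b)).out.2) = s(mk a, mk b) :=
    Quot.out_eq (s(mk a, mk b))
  rw [Sym2.eq_iff] at h
  simpa only [← mk_eq, mk_out] using h

theorem node_inj {c d : Bool} {y z : Sym2 FQ} : node c y = node d z ↔ c = d ∧ y = z := by
  constructor
  · induction y with | _ a b
    induction z with | _ a' b'
    induction a using ind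
    induction b using ind
    induction a' using ind
    induction b' using ind
    rw [node_mk, node_mk, mk_eq, flip_node, Sym2.eq_iff]
    simp only [mk_eq]
    exact id
  · rintro ⟨rfl, rfl⟩; rfl

theorem nodes_node (c : Bool) (p q : FQ) : nodes (node c s(p, q)) = nodes p + nodes q + 1 := by
  induction p using ind
  induction q using ind
  rw [node_mk]; rfl

theorem blacks_node (c : Bool) (p q : FQ) :
    blacks (node c s(p, q)) = blacks p + blacks q + (if c then 1 else 0) := by
  induction p using ind
  induction q using ind
  rw [node_mk]; rfl

theorem cases' (q : FQ) : q = mk .nil ∨ ∃ c p r, q = node c s(p, r) := by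
  induction q using ind with | _ t
  cases t with
  | nil => exact .inl rfl
  | node c a b => exact .inr ⟨c, mk a, mk b, (node_mk c a b).symm⟩

theorem finite_le (n : ℕ) : {q : FQ | nodes q ≤ n}.Finite := by
  induction n with
  | zero =>
    refine (Set.finite_singleton (mk .nil)).subset ?_
    intro q hq
    rcases cases' q with h | ⟨c, p, r, rfl⟩
    · exact h
    · simp [nodes_node] at hq
  | succ n ih =>
    refine ((Set.finite_singleton (mk .nil)).union
      (((Set.finite_univ (α := Bool)).prod (ih.prod ih)).image
        (fun x => node x.1 s(x.2.1, x.2.2)))).subset ?_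
    intro q hq
    rcases cases' q with h | ⟨c, p, r, rfl⟩
    · exact .inl h
    · right
      simp only [Set.mem_ofPred_eq, nodes_node] at hq
      exact ⟨(c, p, r), ⟨trivial, by simp only [Set.mem_ofPred_eq]; omega, by simp only [Set.mem_ofPred_eq]; omega⟩, rfl⟩

theorem finite_S (n k : ℕ) : {q : FQ | nodes q = n ∧ blacks q = k}.Finite :=
  (finite_le n).subset fun _ h => h.1.le

noncomputable def S (n k : ℕ) : Finset FQ := (finite_S n k).toFinset

theorem mem_S {n k : ℕ} {q : FQ} : q ∈ S n k ↔ nodes q = n ∧ blacks q = k := by simp [S]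

theorem finite_P (n k : ℕ) :
    {x : FQ × FQ | nodes x.1 + nodes x.2 = n ∧ blacks x.1 + blacks x.2 = k}.Finite :=
  ((finite_le n).prod (finite_le n)).subset fun x h =>
    ⟨by have := h.1; simp only [Set.mem_ofPred_eq]; omega,
     by have := h.1; simp only [Set.mem_ofPred_eq]; omega⟩

noncomputable def P (n k : ℕ) : Finset (FQ × FQ) := (finite_P n k).toFinset

theorem mem_P {n k : ℕ} {x : FQ × FQ} :
    x ∈ P n k ↔ nodes x.1 + nodes x.2 = n ∧ blacks x.1 + blacks x.2 = k := by simp [P]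

open Classical in
noncomputable def N (n k : ℕ) : Finset (Sym2 FQ) := (P n k).image (fun x => s(x.1, x.2))

theorem mem_N {n k : ℕ} {p q : FQ} :
    s(p, q) ∈ N n k ↔ nodes p + nodes q = n ∧ blacks p + blacks q = k := by
  simp only [N, Finset.mem_image, mem_P, Prod.exists, Sym2.eq_iff]
  constructor
  · rintro ⟨a, b, h, ⟨rfl, rfl⟩ | ⟨rfl, rfl⟩⟩ <;> omega
  · intro h; exact ⟨p, q, h, .inl ⟨rfl, rfl⟩⟩

open Classical in
theorem two_mul_card_image {α : Type*} (A : Finset (α × α))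
    (hA : ∀ x ∈ A, x.swap ∈ A) :
    2 * (A.image (fun x => s(x.1, x.2))).card = A.card + (A.filter (fun x => x.1 = x.2)).card := by
  have hm : ∀ B : Finset (α × α), B ⊆ A → ∀ x ∈ B, s(x.1, x.2) ∈ A.image (fun x => s(x.1, x.2)) :=
    fun B hB x hx => Finset.mem_image_of_mem (fun x : α × α => s(x.1, x.2)) (hB hx)
  rw [Finset.card_eq_sum_card_fiberwise (hm A subset_rfl),
    Finset.card_eq_sum_card_fiberwise (hm _ (Finset.filter_subset _ A)),
    ← Finset.sum_add_distrib, mul_comm, ← smul_eq_mul, ← Finset.sum_const]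
  refine Finset.sum_congr rfl ?_
  intro z hz
  obtain ⟨⟨a, b⟩, hab, rfl⟩ := Finset.mem_image.1 hz
  have hba := hA _ hab
  by_cases h : a = b
  · subst h
    have h1 : A.filter (fun x => s(x.1, x.2) = s(a, a)) = {(a, a)} := by
      ext ⟨x, y⟩
      simp only [Finset.mem_filter, Sym2.eq_iff, Finset.mem_singleton, Prod.mk.injEq]
      constructor
      · tauto
      · rintro ⟨rfl, rfl⟩; tauto
    have h2 : (A.filter (fun x => x.1 = x.2)).filter (fun x => s(x.1, x.2) = s(a, a)) = {(a, a)} := by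
      ext ⟨x, y⟩
      simp only [Finset.mem_filter, Sym2.eq_iff, Finset.mem_singleton, Prod.mk.injEq]
      constructor
      · tauto
      · rintro ⟨rfl, rfl⟩; tauto
    simp only [h1, h2, Finset.card_singleton]
  · have h1 : A.filter (fun x => s(x.1, x.2) = s(a, b)) = {(a, b), (b, a)} := by
      ext ⟨x, y⟩
      simp only [Finset.mem_filter, Sym2.eq_iff, Finset.mem_singleton, Finset.mem_insert, Prod.mk.injEq]
      constructor
      · tauto
      · rintro (⟨rfl, rfl⟩ | ⟨rfl, rfl⟩)
        · tauto
        · exact ⟨hba, by tauto⟩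
    have h2 : (A.filter (fun x => x.1 = x.2)).filter (fun x => s(x.1, x.2) = s(a, b)) = ∅ := by
      ext ⟨x, y⟩
      simp only [Finset.mem_filter, Sym2.eq_iff, Finset.notMem_empty, iff_false]
      rintro ⟨⟨_, rfl⟩, ⟨rfl, rfl⟩ | ⟨rfl, rfl⟩⟩ <;> exact h rfl
    have hne : (a, b) ≠ (b, a) := fun e => h (Prod.mk.inj e).1
    simp only [h1, h2, Finset.card_pair hne, Finset.card_empty]

theorem card_P (n k : ℕ) : (P n k).card =
    ∑ l ∈ Finset.range (n + 1), ∑ m ∈ Finset.range (k + 1),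
      (S l m).card * (S (n - l) (k - m)).card := by
  classical
  have hm : ∀ x ∈ P n k, (nodes x.1, blacks x.1) ∈ Finset.range (n + 1) ×ˢ Finset.range (k + 1) := by
    intro x hx
    rw [mem_P] at hx
    simp only [Finset.mem_product, Finset.mem_range]
    omega
  rw [Finset.card_eq_sum_card_fiberwise hm, Finset.sum_product]
  refine Finset.sum_congr rfl fun l hl => Finset.sum_congr rfl fun m hm => ?_
  rw [← Finset.card_product]
  congr 1
  ext ⟨p, q⟩
  simp only [Finset.mem_range] at hl hm
  simp only [Finset.mem_filter, mem_P, Finset.mem_product, mem_S, Prod.mk.injEq]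
  omega

open Classical in
theorem card_diag (n k : ℕ) : ((P n k).filter (fun x => x.1 = x.2)).card =
    if n % 2 = 0 ∧ k % 2 = 0 then (S (n / 2) (k / 2)).card else 0 := by
  split_ifs with h
  · rw [← Finset.card_image_of_injective (S (n / 2) (k / 2)) (f := fun q => (q, q))
      (fun a b e => (Prod.mk.inj e).1)]
    congr 1
    ext ⟨p, q⟩
    simp only [Finset.mem_filter, mem_P, Finset.mem_image, mem_S, Prod.mk.injEq]
    constructor
    · rintro ⟨h1, rfl⟩
      exact ⟨p, by omega, rfl, rfl⟩
    · rintro ⟨r, h1, rfl, rfl⟩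
      exact ⟨by omega, rfl⟩
  · rw [Finset.card_eq_zero, Finset.filter_eq_empty_iff]
    rintro ⟨p, q⟩ hx e
    rw [mem_P] at hx
    simp only at hx e
    subst e
    omega

theorem two_card_N (n k : ℕ) : 2 * (N n k).card =
    (∑ l ∈ Finset.range (n + 1), ∑ m ∈ Finset.range (k + 1),
      (S l m).card * (S (n - l) (k - m)).card) +
    if n % 2 = 0 ∧ k % 2 = 0 then (S (n / 2) (k / 2)).card else 0 := by
  classical
  rw [← card_P, ← card_diag, ← two_mul_card_image]
  · rfl
  · intro x hx
    rw [mem_P] at hx ⊢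
    simp only [Prod.fst_swap, Prod.snd_swap]
    omega

theorem card_S_zero (n : ℕ) : (S (n + 1) 0).card = (N n 0).card := by
  classical
  rw [← Finset.card_image_of_injective (N n 0) (f := node false) (fun a b e => (node_inj.1 e).2)]
  congr 1
  ext q
  simp only [mem_S, Finset.mem_image]
  constructor
  · rintro ⟨h1, h2⟩
    rcases cases' q with rfl | ⟨c, p, r, rfl⟩
    · simp [T2.nodes] at h1
    · rw [nodes_node] at h1
      rw [blacks_node] at h2
      cases c
      · exact ⟨_, mem_N.2 ⟨by omega, by omega⟩, rfl⟩
      · simp at h2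
  · rintro ⟨z, hz, rfl⟩
    induction z with | _ a b
    rw [mem_N] at hz
    rw [nodes_node, blacks_node]
    simp; omega

theorem card_S_succ (n k : ℕ) : (S (n + 1) (k + 1)).card = (N n (k + 1)).card + (N n k).card := by
  classical
  rw [← Finset.card_image_of_injective (N n (k + 1)) (f := node false) (fun a b e => (node_inj.1 e).2),
    ← Finset.card_image_of_injective (N n k) (f := node true) (fun a b e => (node_inj.1 e).2),
    ← Finset.card_union_of_disjoint]
  · congr 1
    ext q
    simp only [mem_S, Finset.mem_image, Finset.mem_union]
    constructor
    · rintro ⟨h1, h2⟩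
      rcases cases' q with rfl | ⟨c, p, r, rfl⟩
      · simp [T2.nodes] at h1
      · rw [nodes_node] at h1
        rw [blacks_node] at h2
        cases c
        · exact .inl ⟨_, mem_N.2 ⟨by omega, by simpa using h2⟩, rfl⟩
        · exact .inr ⟨_, mem_N.2 ⟨by omega, by simpa using h2⟩, rfl⟩
    · rintro (⟨z, hz, rfl⟩ | ⟨z, hz, rfl⟩)
      all_goals
        induction z with | _ a b
        rw [mem_N] at hz
        rw [nodes_node, blacks_node]
        simp; omega
  · rw [Finset.disjoint_left]
    intro q h1 h2
    obtain ⟨y, _, rfl⟩ := Finset.mem_image.1 h1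
    obtain ⟨z, _, e⟩ := Finset.mem_image.1 h2
    exact absurd (node_inj.1 e).1 (by simp)

theorem blacks_le (t : T2) : t.blacks ≤ t.nodes := by
  induction t with
  | nil => simp [T2.blacks]
  | node c a b h1 h2 =>
    simp only [T2.blacks, T2.nodes]
    split_ifs <;> omega

theorem card_S_lt {n k : ℕ} (h : n < k) : (S n k).card = 0 := by
  rw [Finset.card_eq_zero, Finset.eq_empty_iff_forall_notMem]
  intro q
  induction q using ind with | _ t
  rw [mem_S]
  have := blacks_le t
  simp only [nodes_mk, blacks_mk]
  omega

theorem card_S_00 : (S 0 0).card = 1 := by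
  rw [Finset.card_eq_one]
  refine ⟨mk .nil, ?_⟩
  ext q
  rw [mem_S, Finset.mem_singleton]
  rcases cases' q with rfl | ⟨c, p, r, rfl⟩
  · simp [T2.nodes, T2.blacks]
  · rw [nodes_node]
    constructor
    · omega
    · intro h
      have := congrArg nodes h
      rw [nodes_node] at this
      simp [T2.nodes] at this

/-- Recurrence, no black nodes. -/
theorem rec_zero (n : ℕ) : ((S (n + 1) 0).card : ℚ) =
    (1 / 2) * ((∑ l ∈ Finset.range (n + 1), ((S l 0).card : ℚ) * (S (n - l) 0).card) +
      if n % 2 = 0 then ((S (n / 2) 0).card : ℚ) else 0) := by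
  have h := two_card_N n 0
  rw [← card_S_zero] at h
  simp only [zero_add, Finset.sum_range_one, Nat.zero_mod, and_true, Nat.zero_div, Nat.sub_zero] at h
  have h' := congrArg (Nat.cast (R := ℚ)) h
  push_cast at h'
  rw [← h']; ring

theorem rec_succ (n k : ℕ) : ((S (n + 1) (k + 1)).card : ℚ) =
    (1 / 2) * ((∑ r ∈ Finset.range 2, ∑ l ∈ Finset.range (n + 1),
      ∑ m ∈ Finset.range (k + 1 - r + 1),
        ((S l m).card : ℚ) * (S (n - l) (k + 1 - r - m)).card) +
      if n % 2 = 0 then ((S (n / 2) ((k + 1) / 2)).card : ℚ) else 0) := by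
  have h1 := congrArg (Nat.cast (R := ℚ)) (two_card_N n k)
  have h2 := congrArg (Nat.cast (R := ℚ)) (two_card_N n (k + 1))
  push_cast at h1 h2
  rw [card_S_succ, Finset.sum_range_succ, Finset.sum_range_one]
  simp only [Nat.sub_zero, Nat.add_sub_cancel]
  have h3 : (if n % 2 = 0 then ((S (n / 2) ((k + 1) / 2)).card : ℚ) else 0) =
      (if n % 2 = 0 ∧ k % 2 = 0 then ((S (n / 2) (k / 2)).card : ℚ) else 0) +
      (if n % 2 = 0 ∧ (k + 1) % 2 = 0 then ((S (n / 2) ((k + 1) / 2)).card : ℚ) else 0) := by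
    by_cases hn : n % 2 = 0
    · rcases Nat.mod_two_eq_zero_or_one k with hk | hk
      · have e : (k + 1) / 2 = k / 2 := by omega
        have e' : (k + 1) % 2 = 1 := by omega
        simp [hn, hk, e, e']
      · have e' : (k + 1) % 2 = 0 := by omega
        simp [hn, hk, e']
    · simp [hn]
  rw [h3]
  push_cast
  linarith

theorem card_eq_B (n : ℕ) : ((S n 0).card : ℚ) = B n := by
  induction n using Nat.strong_induction_on with
  | _ n ih =>
    match n, ih with
    | 0, _ => rw [B, card_S_00]; simp
    | 1, _ => rw [B, rec_zero 0]; simp [card_S_00]; norm_num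
    | n + 2, ih =>
      rw [B, rec_zero (n + 1),
        Finset.sum_attach (Finset.range (n + 2)) (fun k => B (n + 1 - k) * B k)]
      congr 2
      · refine Finset.sum_congr rfl fun l hl => ?_
        rw [Finset.mem_range] at hl
        rw [ih l (by omega), ih (n + 1 - l) (by omega), mul_comm]
      · rw [ih ((n + 1) / 2) (by omega)]
        rcases Nat.mod_two_eq_zero_or_one n with hk | hk
        · have e1 : (n + 1) % 2 = 1 := by omega
          have e2 : (n + 2) % 2 = 0 := by omega
          simp [e1, e2]
        · have e1 : (n + 1) % 2 = 0 := by omega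
          have e2 : (n + 2) % 2 = 1 := by omega
          simp [e1, e2]

theorem card_eq_B2 (n : ℕ) : ∀ k, ((S n k).card : ℚ) = B2 n k := by
  induction n using Nat.strong_induction_on with
  | _ n ih =>
    intro k
    match n, ih with
    | 0, _ =>
      rw [B2]
      rcases k with _ | k
      · simp [card_S_00]
      · simp [card_S_lt (Nat.succ_pos k)]
    | 1, _ =>
      rw [B2]
      match k with
      | 0 => rw [card_eq_B, B]; simp
      | 1 =>
        rw [rec_succ 0 0]
        simp [Finset.sum_range_succ, card_S_00, card_S_lt]
        norm_num
      | k + 2 => rw [card_S_lt (by omega)]; simp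
    | n + 2, ih =>
      rw [B2]
      split_ifs with h0 h1 h2
      · subst h0; exact card_eq_B _
      · rw [card_S_lt h1]; simp
      all_goals
        obtain ⟨k, rfl⟩ := Nat.exists_eq_succ_of_ne_zero h0
        rw [Nat.succ_eq_add_one, rec_succ (n + 1) k]
        congr 2
        · refine Finset.sum_congr rfl fun r _ => ?_
          rw [Finset.sum_attach (Finset.range (n + 2)) (fun l =>
            ∑ m ∈ Finset.range (k + 1 - r + 1), B2 l m * B2 (n + 1 - l) (k + 1 - r - m))]
          refine Finset.sum_congr rfl fun l hl => Finset.sum_congr rfl fun m _ => ?_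
          rw [Finset.mem_range] at hl
          rw [ih l (by omega), ih (n + 1 - l) (by omega)]
      · rw [if_neg (by omega)]
      · rw [if_pos (by omega), ih ((n + 1) / 2) (by omega)]

theorem class_inj : Function.Injective (fun q : FQ => {s : T2 | mk s = q}) := by
  intro p q h
  induction p using ind with | _ t
  have : t ∈ {s : T2 | mk s = q} := by
    rw [← show {s : T2 | mk s = mk t} = {s : T2 | mk s = q} from h]; rfl
  exact this

theorem classes_eq (n k : ℕ) :
    {C : Set T2 | ∃ t : T2, t.nodes = n ∧ t.blacks = k ∧ C = {s : T2 | Flip2 s t}} =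
      (fun q : FQ => {s : T2 | mk s = q}) '' (S n k : Set FQ) := by
  ext C
  simp only [Set.mem_ofPred_eq, Set.mem_image, Finset.mem_coe, mem_S]
  constructor
  · rintro ⟨t, h1, h2, rfl⟩
    exact ⟨mk t, ⟨h1, h2⟩, by simp only [mk_eq]⟩
  · rintro ⟨q, h, rfl⟩
    induction q using ind with | _ t
    exact ⟨t, h.1, h.2, by simp only [mk_eq]⟩

end FQ

/-- `B2 n k` equals the number of color-preserving flip-equivalence classes of 2-colored
planar binary trees with exactly `n` nodes of which exactly `k` are black; in particular
`B2 n k` is a natural number. -/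
theorem B2_counts_classes (n k : ℕ) :
    {C : Set T2 | ∃ t : T2, t.nodes = n ∧ t.blacks = k ∧ C = {s : T2 | Flip2 s t}}.Finite ∧
    ({C : Set T2 | ∃ t : T2, t.nodes = n ∧ t.blacks = k ∧
        C = {s : T2 | Flip2 s t}}.ncard : ℚ) = B2 n k := by
  rw [FQ.classes_eq]
  refine ⟨(FQ.S n k).finite_toSet.image _, ?_⟩
  rw [Set.ncard_image_of_injective _ FQ.class_inj, Set.ncard_coe_finset]
  exact FQ.card_eq_B2 n k
end

section
/- In the bivariate formal power series ring ℚ⟦x,y⟧, the series M(x,y) = Σ_{n,k} B₂(n,k)·x^n·y^k and the parity-split series of B₂ satisfy (1 − y)·M(x,y) = 2·(Q(x,y) − y·R(x,y)) − (1 − y)·(P₀(x,y)² + y·P₁(x,y)² + x·Q(x,y)² + x·y·R(x,y)²). -/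
/-- The bivariate generating function `M(x,y) = ∑_{n,k} B2 n k · xⁿ y^k`. -/
noncomputable def M : MvPowerSeries (Fin 2) ℚ :=
  fun d => B2 (d 0) (d 1)

/-- `P₀(x,y) = ∑_{n≥0} ∑_k B2 (2n) (2k) · xⁿ y^k`. -/
noncomputable def P0 : MvPowerSeries (Fin 2) ℚ :=
  fun d => B2 (2 * d 0) (2 * d 1)

/-- `P₁(x,y) = ∑_{n≥1} ∑_k B2 (2n) (2k+1) · xⁿ y^k`. -/
noncomputable def P1 : MvPowerSeries (Fin 2) ℚ :=
  fun d => if 1 ≤ d 0 then B2 (2 * d 0) (2 * d 1 + 1) else 0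

/-- `Q(x,y) = ∑_{n≥0} ∑_k B2 (2n+1) (2k) · xⁿ y^k`. -/
noncomputable def Q : MvPowerSeries (Fin 2) ℚ :=
  fun d => B2 (2 * d 0 + 1) (2 * d 1)

/-- `R(x,y) = ∑_{n≥0} ∑_k B2 (2n+1) (2k+1) · xⁿ y^k`. -/
noncomputable def R : MvPowerSeries (Fin 2) ℚ :=
  fun d => B2 (2 * d 0 + 1) (2 * d 1 + 1)

open Finset in
/-- Coefficients of `M ^ 2`. -/
def SS (n k : ℕ) : ℚ :=
  ∑ l ∈ range (n + 1), ∑ m ∈ range (k + 1), B2 l m * B2 (n - l) (k - m)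

theorem B2_zero_of_lt (n k : ℕ) (h : n < k) : B2 n k = 0 := by
  rcases n with _ | _ | n
  · rw [B2]; rw [if_neg (by omega)]
  · rw [B2]; rw [if_neg (by omega)]
  · rw [B2]; rw [if_neg (by omega), if_pos (by omega)]

theorem B2_zero_right (n : ℕ) : B2 n 0 = B n := by
  rcases n with _ | _ | n
  · simp [B2, B]
  · simp [B2, B]
  · rw [B2]; simp

theorem SS_zero_of_lt (n k : ℕ) (h : n < k) : SS n k = 0 := by
  unfold SS
  refine Finset.sum_eq_zero fun l hl => Finset.sum_eq_zero fun m hm => ?_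
  rw [Finset.mem_range] at hl hm
  by_cases h1 : l < m
  · rw [B2_zero_of_lt l m h1, zero_mul]
  · rw [B2_zero_of_lt (n - l) (k - m) (by omega), mul_zero]

theorem rec_zero (a : ℕ) : 2 * B2 (2 * a + 1) 0 = SS (2 * a) 0 + B2 a 0 := by
  rcases a with _ | a
  · simp [SS, B2]; norm_num
  · unfold SS
    simp only [zero_add, Finset.sum_range_one, Nat.sub_zero, B2_zero_right]
    rw [show 2 * (a + 1) + 1 = (2 * a + 1) + 2 by ring, B]
    rw [if_neg (by omega), show (2 * a + 1 + 1) / 2 = a + 1 by omega]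
    rw [Finset.sum_attach (Finset.range (2 * a + 1 + 2)) (fun k => B (2 * a + 1 + 1 - k) * B k)]
    rw [show 2 * (a + 1) = 2 * a + 1 + 1 by ring]
    simp only [mul_comm (B (2 * a + 1 + 1 - _))]
    ring

theorem rec_succ (a k : ℕ) :
    2 * B2 (2 * a + 1) (k + 1) = SS (2 * a) (k + 1) + SS (2 * a) k + B2 a ((k + 1) / 2) := by
  by_cases hk : 2 * a + 1 < k + 1
  · rw [SS_zero_of_lt _ _ (by omega), SS_zero_of_lt _ _ (by omega), B2_zero_of_lt _ _ hk,
      B2_zero_of_lt a _ (by omega)]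
    norm_num
  rcases a with _ | a
  · obtain rfl : k = 0 := by omega
    simp [SS, B2, Finset.sum_range_succ]; norm_num
  · unfold SS
    rw [show 2 * (a + 1) + 1 = (2 * a + 1) + 2 by ring, B2]
    rw [if_neg (by omega), if_neg (by omega), if_neg (by omega),
      show (2 * a + 1 + 1) / 2 = a + 1 by omega]
    rw [Finset.sum_range_succ, Finset.sum_range_one]
    rw [Finset.sum_attach (Finset.range (2 * a + 1 + 2))
      (fun l => ∑ m ∈ Finset.range (k + 1 - 0 + 1), B2 l m * B2 (2 * a + 1 + 1 - l) (k + 1 - 0 - m))]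
    rw [Finset.sum_attach (Finset.range (2 * a + 1 + 2))
      (fun l => ∑ m ∈ Finset.range (k + 1 - 1 + 1), B2 l m * B2 (2 * a + 1 + 1 - l) (k + 1 - 1 - m))]
    rw [show 2 * (a + 1) = 2 * a + 1 + 1 by ring]
    simp only [Nat.sub_zero, Nat.add_sub_cancel]
    ring

theorem sum_split (f : ℕ → ℚ) (a : ℕ) : ∑ l ∈ Finset.range (2 * a + 1), f l =
    ∑ i ∈ Finset.range (a + 1), f (2 * i) + ∑ i ∈ Finset.range a, f (2 * i + 1) := by
  induction a with
  | zero => simp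
  | succ a ih =>
    rw [show 2 * (a + 1) + 1 = 2 * a + 1 + 1 + 1 by ring, Finset.sum_range_succ,
      Finset.sum_range_succ, ih, Finset.sum_range_succ _ (a + 1), Finset.sum_range_succ (fun i => f (2 * i + 1)) a]
    rw [show 2 * (a + 1) = 2 * a + 1 + 1 by ring]
    ring

/-- The exponent `(a, b)`. -/
noncomputable def pt (a b : ℕ) : Fin 2 →₀ ℕ := Finsupp.single 0 a + Finsupp.single 1 b

@[simp] theorem pt_zero (a b : ℕ) : pt a b 0 = a := by simp [pt]

@[simp] theorem pt_one (a b : ℕ) : pt a b 1 = b := by simp [pt]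

theorem pt_eta (d : Fin 2 →₀ ℕ) : pt (d 0) (d 1) = d := by
  ext i; fin_cases i <;> simp

open MvPowerSeries in
theorem coeff_sq_pt (F : MvPowerSeries (Fin 2) ℚ) (a b : ℕ) :
    coeff (pt a b) (F ^ 2) = ∑ i ∈ Finset.range (a + 1), ∑ j ∈ Finset.range (b + 1),
      coeff (pt i j) F * coeff (pt (a - i) (b - j)) F := by
  rw [pow_two, coeff_mul, ← Finset.sum_product']
  refine Finset.sum_bij' (fun p _ => (p.1 0, p.1 1))
    (fun q _ => (pt q.1 q.2, pt (a - q.1) (b - q.2))) ?_ ?_ ?_ ?_ ?_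
  · rintro ⟨u, v⟩ h
    rw [Finset.HasAntidiagonal.mem_antidiagonal] at h
    have h0 := DFunLike.congr_fun h 0
    have h1 := DFunLike.congr_fun h 1
    simp at h0 h1 ⊢
    omega
  · rintro ⟨u, v⟩ h
    simp only [Finset.mem_product, Finset.mem_range] at h
    rw [Finset.HasAntidiagonal.mem_antidiagonal]
    ext i
    fin_cases i <;> simp <;> omega
  · rintro ⟨u, v⟩ h
    rw [Finset.HasAntidiagonal.mem_antidiagonal] at h
    have h0 := DFunLike.congr_fun h 0
    have h1 := DFunLike.congr_fun h 1
    simp at h0 h1 ⊢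
    refine ⟨pt_eta u, ?_⟩
    rw [← pt_eta v]
    congr 1 <;> omega
  · rintro ⟨u, v⟩ h
    simp
  · rintro ⟨u, v⟩ h
    rw [Finset.HasAntidiagonal.mem_antidiagonal] at h
    have h0 := DFunLike.congr_fun h 0
    have h1 := DFunLike.congr_fun h 1
    simp at h0 h1 ⊢
    have hv : pt (a - u 0) (b - u 1) = v := by
      rw [← pt_eta v]
      congr 1 <;> omega
    rw [pt_eta u, hv]

open MvPowerSeries in
theorem coeff_X1 (F : MvPowerSeries (Fin 2) ℚ) (a b : ℕ) :
    coeff (pt a b) (X 1 * F) = if b = 0 then 0 else coeff (pt a (b - 1)) F := by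
  rw [X, coeff_monomial_mul]
  have hle : Finsupp.single (1 : Fin 2) 1 ≤ pt a b ↔ 1 ≤ b := by simp
  have hs : pt a b - Finsupp.single (1 : Fin 2) 1 = pt a (b - 1) := by
    ext i; fin_cases i <;> simp
  simp only [hle, hs, one_mul]
  rcases b with _ | b <;> simp

open MvPowerSeries in
theorem coeff_X0 (F : MvPowerSeries (Fin 2) ℚ) (a b : ℕ) :
    coeff (pt a b) (X 0 * F) = if a = 0 then 0 else coeff (pt (a - 1) b) F := by
  rw [X, coeff_monomial_mul]
  have hle : Finsupp.single (0 : Fin 2) 1 ≤ pt a b ↔ 1 ≤ a := by simp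
  have hs : pt a b - Finsupp.single (0 : Fin 2) 1 = pt (a - 1) b := by
    ext i; fin_cases i <;> simp
  simp only [hle, hs, one_mul]
  rcases a with _ | a <;> simp

theorem coeff_M (a b : ℕ) : MvPowerSeries.coeff (pt a b) M = B2 a b := by
  change B2 (pt a b 0) (pt a b 1) = _
  simp

theorem coeff_P0 (a b : ℕ) : MvPowerSeries.coeff (pt a b) P0 = B2 (2 * a) (2 * b) := by
  change B2 (2 * pt a b 0) (2 * pt a b 1) = _
  simp

theorem coeff_P1 (a b : ℕ) : MvPowerSeries.coeff (pt a b) P1 = B2 (2 * a) (2 * b + 1) := by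
  change (if 1 ≤ pt a b 0 then B2 (2 * pt a b 0) (2 * pt a b 1 + 1) else 0) = _
  rcases a with _ | a
  · simp [B2]
  · simp

theorem coeff_Q (a b : ℕ) : MvPowerSeries.coeff (pt a b) Q = B2 (2 * a + 1) (2 * b) := by
  change B2 (2 * pt a b 0 + 1) (2 * pt a b 1) = _
  simp

theorem coeff_R (a b : ℕ) : MvPowerSeries.coeff (pt a b) R = B2 (2 * a + 1) (2 * b + 1) := by
  change B2 (2 * pt a b 0 + 1) (2 * pt a b 1 + 1) = _
  simp

open MvPowerSeries in
theorem coeff_even (a b : ℕ) : coeff (pt a b) (P0 ^ 2 + X 1 * P1 ^ 2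
      + X 0 * Q ^ 2 + X 0 * X 1 * R ^ 2) = SS (2 * a) (2 * b) := by
  rw [mul_assoc (X 0)]
  simp only [map_add, coeff_X0, coeff_X1, coeff_sq_pt, coeff_P0, coeff_P1, coeff_Q, coeff_R]
  unfold SS
  simp only [sum_split, Finset.sum_add_distrib]
  have e1 : ∀ n i : ℕ, 2 * n - 2 * i = 2 * (n - i) := fun n i => by omega
  have e2 : ∀ n i : ℕ, i ∈ Finset.range (n + 1) →
      2 * (n + 1) - (2 * i + 1) = 2 * (n - i) + 1 := fun n i h => by
    rw [Finset.mem_range] at h; omega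
  have f1 : ∀ (n : ℕ) (f : ℕ → ℕ → ℚ), ∑ i ∈ Finset.range n, f i (2 * n - (2 * i + 1)) =
      if n = 0 then 0 else ∑ i ∈ Finset.range (n - 1 + 1), f i (2 * (n - 1 - i) + 1) := by
    intro n f
    rcases n with _ | n
    · simp
    · rw [if_neg (by omega), Nat.add_sub_cancel]
      exact Finset.sum_congr rfl fun i hi => by rw [e2 n i hi]
  simp only [e1]
  have g1 : ∀ l l' : ℕ, ∑ j ∈ Finset.range b, B2 l (2 * j + 1) * B2 l' (2 * b - (2 * j + 1)) =
      if b = 0 then 0 else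
        ∑ j ∈ Finset.range (b - 1 + 1), B2 l (2 * j + 1) * B2 l' (2 * (b - 1 - j) + 1) :=
    fun l l' => f1 b fun j t => B2 l (2 * j + 1) * B2 l' t
  simp only [g1]
  rw [f1 a fun i t => ∑ j ∈ Finset.range (b + 1), B2 (2 * i + 1) (2 * j) * B2 t (2 * (b - j))]
  rw [f1 a fun i t => if b = 0 then 0 else ∑ j ∈ Finset.range (b - 1 + 1),
    B2 (2 * i + 1) (2 * j + 1) * B2 t (2 * (b - 1 - j) + 1)]
  by_cases ha : a = 0 <;> by_cases hb : b = 0 <;> simp [ha, hb] <;> ring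

/-- In `ℚ⟦x,y⟧`, `(1 − y)·M(x,y) = 2·(Q(x,y) − y·R(x,y))
− (1 − y)·(P₀(x,y)² + y·P₁(x,y)² + x·Q(x,y)² + x·y·R(x,y)²)`. -/
theorem one_sub_y_mul_M_eq :
    (1 - MvPowerSeries.X 1) * M =
      2 * (Q - MvPowerSeries.X 1 * R)
      - (1 - MvPowerSeries.X 1) * (P0 ^ 2 + MvPowerSeries.X 1 * P1 ^ 2
          + MvPowerSeries.X 0 * Q ^ 2 + MvPowerSeries.X 0 * MvPowerSeries.X 1 * R ^ 2) := by
  have key := coeff_even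
  generalize (P0 ^ 2 + MvPowerSeries.X 1 * P1 ^ 2
          + MvPowerSeries.X 0 * Q ^ 2 + MvPowerSeries.X 0 * MvPowerSeries.X 1 * R ^ 2) = W at key ⊢
  ext d
  rw [← pt_eta d]
  generalize d 0 = a
  generalize d 1 = b
  simp only [sub_mul, one_mul, two_mul (Q - MvPowerSeries.X 1 * R), map_sub, map_add, coeff_X1, key, coeff_M, coeff_Q, coeff_R]
  rcases b with _ | b
  · have := rec_zero a
    simp only [if_true, mul_zero]
    linarith
  · have h1 := rec_succ a (2 * b + 1)
    have h2 := rec_succ a (2 * b)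
    rw [show (2 * b + 1 + 1) / 2 = b + 1 by omega] at h1
    rw [show (2 * b + 1) / 2 = b by omega] at h2
    rw [if_neg (by omega), if_neg (by omega), if_neg (by omega), Nat.add_sub_cancel,
      show 2 * (b + 1) = 2 * b + 1 + 1 by ring]
    linarith
end
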